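/- Let (𝓛, X₁,…,X_r, Y₁,…,Y_r) be a solution of the expanding Ricci soliton ODE system defined on [s₀, ∞). If 𝒮₁(s₀) = 0 and 𝒮₂(s₀) = 0, then 𝒮₁(s) = 0 and 𝒮₂(s) = 0 for all s ≥ s₀. -/

import Mathlib

open Filter Topology

/-- `(𝓛, X₁,…,X_r, Y₁,…,Y_r)` solves the expanding Ricci soliton ODE system
`𝓛' = 𝓛(∑ⱼ dⱼXⱼ² − (ε/2)𝓛²)`,
`Xᵢ' = Xᵢ(∑ⱼ dⱼXⱼ² − (ε/2)𝓛² − 1) + μᵢYᵢ² + (ε/2)𝓛²`,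
`Yᵢ' = Yᵢ(∑ⱼ dⱼXⱼ² − (ε/2)𝓛² − Xᵢ)` on the set `I`. -/
def IsSolitonSol (r : ℕ) (d : Fin r → ℕ) (μ : Fin r → ℝ) (ε : ℝ)
    (L : ℝ → ℝ) (X Y : Fin r → ℝ → ℝ) (I : Set ℝ) : Prop :=
  (∀ s ∈ I, HasDerivAt L
      (L s * (∑ j, (d j : ℝ) * X j s ^ 2 - ε / 2 * L s ^ 2)) s) ∧
  (∀ i, ∀ s ∈ I, HasDerivAt (X i)
      (X i s * (∑ j, (d j : ℝ) * X j s ^ 2 - ε / 2 * L s ^ 2 - 1)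
        + μ i * Y i s ^ 2 + ε / 2 * L s ^ 2) s) ∧
  (∀ i, ∀ s ∈ I, HasDerivAt (Y i)
      (Y i s * (∑ j, (d j : ℝ) * X j s ^ 2 - ε / 2 * L s ^ 2 - X i s)) s)

/-!
Set `Q = ∑ⱼ dⱼXⱼ² − (ε/2)𝓛²`. Along a solution the pair `(𝒮₁, 𝒮₂)` satisfies the homogeneous linear
system `𝒮₁' = 2Q𝒮₁ + ε𝓛²𝒮₂`, `𝒮₂' = 𝒮₁ + (Q − 1)𝒮₂`, because the cubic terms `∑ᵢ dᵢμᵢXᵢYᵢ²`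
coming from `Xᵢ²` and from `μᵢYᵢ²` cancel. Its coefficients are continuous, so by uniqueness for
linear ODEs the pair vanishes identically as soon as it vanishes at one time.
-/

section LinearODE

open scoped Matrix

theorem eqOn_zero_of_hasDerivWithinAt_clm_apply {E : Type*} [NormedAddCommGroup E]
    [NormedSpace ℝ E] {A : ℝ → E →L[ℝ] E} {f : ℝ → E} {I : Set ℝ} {t₀ : ℝ} (hI : I.OrdConnected)
    (hA : ContinuousOn A I) (hf : ∀ t ∈ I, HasDerivWithinAt f (A t (f t)) I t)
    (ht₀ : t₀ ∈ I) (hf₀ : f t₀ = 0) : Set.EqOn f 0 I := by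
  have lipschitz_on_segment {a b : ℝ} (ha : a ∈ I) (hb : b ∈ I) :
      ∃ K, ∀ t ∈ Set.Icc a b, LipschitzOnWith K (A t) Set.univ := by
    obtain ⟨K, hK⟩ := (isCompact_Icc.image_of_continuousOn
      (hA.nnnorm.mono (hI.out ha hb))).bddAbove
    exact ⟨K, fun t ht ↦ ((A t).lipschitz.weaken (hK ⟨t, ht, rfl⟩)).lipschitzOnWith⟩
  have hf_segment {a b : ℝ} (ha : a ∈ I) (hb : b ∈ I) (t : ℝ) (ht : t ∈ Set.Icc a b) :
      HasDerivWithinAt f (A t (f t)) (Set.Icc a b) t :=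
    (hf t (hI.out ha hb ht)).mono (hI.out ha hb)
  have zero_solution (s : Set ℝ) (t : ℝ) : HasDerivWithinAt (0 : ℝ → E) (A t 0) s t := by
    simpa only [map_zero] using hasDerivWithinAt_zero t s
  intro t ht
  rcases le_total t₀ t with h | h
  · obtain ⟨K, hK⟩ := lipschitz_on_segment ht₀ ht
    exact ODE_solution_unique_of_mem_Icc_right (fun x hx ↦ hK x (Set.Ico_subset_Icc_self hx))
      (fun x hx ↦ (hf_segment ht₀ ht x hx).continuousWithinAt)
      (fun x hx ↦ (hf_segment ht₀ ht x (Set.Ico_subset_Icc_self hx)).mono_of_mem_nhdsWithin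
        (Icc_mem_nhdsGE_of_mem hx))
      (fun _ _ ↦ Set.mem_univ _) continuousOn_const (fun x _ ↦ zero_solution _ x)
      (fun _ _ ↦ Set.mem_univ _) hf₀ ⟨h, le_rfl⟩
  · obtain ⟨K, hK⟩ := lipschitz_on_segment ht ht₀
    exact ODE_solution_unique_of_mem_Icc_left (fun x hx ↦ hK x (Set.Ioc_subset_Icc_self hx))
      (fun x hx ↦ (hf_segment ht ht₀ x hx).continuousWithinAt)
      (fun x hx ↦ (hf_segment ht ht₀ x (Set.Ioc_subset_Icc_self hx)).mono_of_mem_nhdsWithin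
        (Icc_mem_nhdsLE_of_mem hx))
      (fun _ _ ↦ Set.mem_univ _) continuousOn_const (fun x _ ↦ zero_solution _ x)
      (fun _ _ ↦ Set.mem_univ _) hf₀ ⟨le_rfl, h⟩

theorem eqOn_zero_of_hasDerivWithinAt_mulVec {ι : Type*} [Fintype ι] {A : ℝ → Matrix ι ι ℝ}
    {f : ℝ → ι → ℝ} {I : Set ℝ} {t₀ : ℝ} (hI : I.OrdConnected) (hA : ContinuousOn A I)
    (hf : ∀ t ∈ I, HasDerivWithinAt f (A t *ᵥ f t) I t) (ht₀ : t₀ ∈ I) (hf₀ : f t₀ = 0) :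
    Set.EqOn f 0 I := by
  classical
  let toCLM : Matrix ι ι ℝ →ₗ[ℝ] (ι → ℝ) →L[ℝ] (ι → ℝ) :=
    LinearMap.toContinuousLinearMap.toLinearMap ∘ₗ Matrix.toLin'.toLinearMap
  have toCLM_continuous : Continuous toCLM := toCLM.continuous_of_finiteDimensional
  exact eqOn_zero_of_hasDerivWithinAt_clm_apply (A := fun t ↦ toCLM (A t)) hI
    (toCLM_continuous.comp_continuousOn hA) hf ht₀ hf₀

end LinearODE

section SolitonSystem

variable {r : ℕ} (d : Fin r → ℕ) (μ : Fin r → ℝ) (ε : ℝ) (L : ℝ → ℝ) (X Y : Fin r → ℝ → ℝ)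

/-- The rate `Q = ∑ⱼ dⱼXⱼ² − (ε/2)𝓛²` for which the soliton system reads `𝓛' = Q𝓛`. -/
noncomputable def solitonRate (s : ℝ) : ℝ :=
  ∑ j, (d j : ℝ) * X j s ^ 2 - ε / 2 * L s ^ 2

/-- The function `𝒮₁` of the soliton system, with the dimension `n` replaced by `∑ᵢ dᵢ`. Together
with `solitonS₂` it cuts out the Einstein locus. -/
noncomputable def solitonS₁ (s : ℝ) : ℝ :=
  ∑ i, (d i : ℝ) * X i s ^ 2 + ∑ i, (d i : ℝ) * μ i * Y i s ^ 2
    + (∑ i, (d i : ℝ) - 1) * (ε / 2) * L s ^ 2 - 1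

/-- The function `𝒮₂` of the soliton system. Together with `solitonS₁` it cuts out the Einstein
locus. -/
noncomputable def solitonS₂ (s : ℝ) : ℝ :=
  ∑ i, (d i : ℝ) * X i s - 1

/-- The coefficient matrix of the linear system satisfied by `(𝒮₁, 𝒮₂)` along a solution. -/
noncomputable def solitonMatrix (s : ℝ) : Matrix (Fin 2) (Fin 2) ℝ :=
  !![2 * solitonRate d ε L X s, ε * L s ^ 2; 1, solitonRate d ε L X s - 1]

end SolitonSystem

namespace IsSolitonSol

open scoped Matrix

variable {r : ℕ} {d : Fin r → ℕ} {μ : Fin r → ℝ} {ε : ℝ} {L : ℝ → ℝ} {X Y : Fin r → ℝ → ℝ}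
  {I : Set ℝ} {s : ℝ}

theorem hasDerivAt_L_sq (hsol : IsSolitonSol r d μ ε L X Y I) (hs : s ∈ I) :
    HasDerivAt (fun t ↦ L t ^ 2) (2 * solitonRate d ε L X s * L s ^ 2) s := by
  refine ((hsol.1 s hs).fun_pow 2).congr_deriv ?_
  rw [solitonRate]
  push_cast
  ring

theorem hasDerivAt_sum_X (hsol : IsSolitonSol r d μ ε L X Y I) (hs : s ∈ I) :
    HasDerivAt (fun t ↦ ∑ i, (d i : ℝ) * X i t)
      ((solitonRate d ε L X s - 1) * ∑ i, (d i : ℝ) * X i s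
        + ∑ i, (d i : ℝ) * μ i * Y i s ^ 2 + ε / 2 * L s ^ 2 * ∑ i, (d i : ℝ)) s := by
  refine (HasDerivAt.fun_sum fun i _ ↦ (hsol.2.1 i s hs).const_mul (d i : ℝ)).congr_deriv ?_
  rw [← solitonRate]
  simp only [Finset.mul_sum, ← Finset.sum_add_distrib]
  exact Finset.sum_congr rfl fun i _ ↦ by ring

theorem hasDerivAt_sum_X_sq (hsol : IsSolitonSol r d μ ε L X Y I) (hs : s ∈ I) :
    HasDerivAt (fun t ↦ ∑ i, (d i : ℝ) * X i t ^ 2)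
      (2 * (solitonRate d ε L X s - 1) * ∑ i, (d i : ℝ) * X i s ^ 2
        + 2 * ∑ i, (d i : ℝ) * μ i * X i s * Y i s ^ 2
        + ε * L s ^ 2 * ∑ i, (d i : ℝ) * X i s) s := by
  refine (HasDerivAt.fun_sum fun i _ ↦
    ((hsol.2.1 i s hs).fun_pow 2).const_mul (d i : ℝ)).congr_deriv ?_
  rw [← solitonRate]
  simp only [Finset.mul_sum, ← Finset.sum_add_distrib]
  exact Finset.sum_congr rfl fun i _ ↦ by push_cast; ring

theorem hasDerivAt_sum_Y_sq (hsol : IsSolitonSol r d μ ε L X Y I) (hs : s ∈ I) :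
    HasDerivAt (fun t ↦ ∑ i, (d i : ℝ) * μ i * Y i t ^ 2)
      (2 * solitonRate d ε L X s * ∑ i, (d i : ℝ) * μ i * Y i s ^ 2
        - 2 * ∑ i, (d i : ℝ) * μ i * X i s * Y i s ^ 2) s := by
  refine (HasDerivAt.fun_sum fun i _ ↦
    ((hsol.2.2 i s hs).fun_pow 2).const_mul ((d i : ℝ) * μ i)).congr_deriv ?_
  rw [← solitonRate]
  simp only [Finset.mul_sum, ← Finset.sum_sub_distrib]
  exact Finset.sum_congr rfl fun i _ ↦ by push_cast; ring

theorem hasDerivAt_solitonS₁ (hsol : IsSolitonSol r d μ ε L X Y I) (hs : s ∈ I) :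
    HasDerivAt (solitonS₁ d μ ε L X Y)
      (2 * solitonRate d ε L X s * solitonS₁ d μ ε L X Y s
        + ε * L s ^ 2 * solitonS₂ d X s) s := by
  refine ((((hsol.hasDerivAt_sum_X_sq hs).add (hsol.hasDerivAt_sum_Y_sq hs)).add
    ((hsol.hasDerivAt_L_sq hs).const_mul ((∑ i, (d i : ℝ) - 1) * (ε / 2)))).sub_const
      1).congr_deriv ?_
  simp only [solitonRate, solitonS₁, solitonS₂]
  ring

theorem hasDerivAt_solitonS₂ (hsol : IsSolitonSol r d μ ε L X Y I) (hs : s ∈ I) :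
    HasDerivAt (solitonS₂ d X)
      (solitonS₁ d μ ε L X Y s + (solitonRate d ε L X s - 1) * solitonS₂ d X s) s := by
  refine ((hsol.hasDerivAt_sum_X hs).sub_const 1).congr_deriv ?_
  simp only [solitonRate, solitonS₁, solitonS₂]
  ring

theorem continuousOn_solitonMatrix (hsol : IsSolitonSol r d μ ε L X Y I) :
    ContinuousOn (solitonMatrix d ε L X) I := by
  have hL : ContinuousOn L I := HasDerivAt.continuousOn hsol.1
  have hX (i : Fin r) : ContinuousOn (X i) I := HasDerivAt.continuousOn (hsol.2.1 i)
  have hRate : ContinuousOn (solitonRate d ε L X) I := by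
    unfold solitonRate
    fun_prop
  refine continuousOn_pi.2 <| Fin.forall_fin_two.2
    ⟨continuousOn_pi.2 <| Fin.forall_fin_two.2 ⟨?_, ?_⟩,
      continuousOn_pi.2 <| Fin.forall_fin_two.2 ⟨?_, ?_⟩⟩
  all_goals
    simp only [solitonMatrix, Matrix.of_apply, Matrix.cons_val_zero, Matrix.cons_val_one]
    fun_prop

theorem hasDerivAt_solitonS₁_solitonS₂ (hsol : IsSolitonSol r d μ ε L X Y I) (hs : s ∈ I) :
    HasDerivAt (fun t ↦ ![solitonS₁ d μ ε L X Y t, solitonS₂ d X t])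
      (solitonMatrix d ε L X s *ᵥ ![solitonS₁ d μ ε L X Y s, solitonS₂ d X s]) s := by
  rw [hasDerivAt_pi, Fin.forall_fin_two]
  constructor
  · exact (hsol.hasDerivAt_solitonS₁ hs).congr_deriv
      (by simp [solitonMatrix, mul_comm])
  · exact (hsol.hasDerivAt_solitonS₂ hs).congr_deriv
      (by simp [solitonMatrix, mul_comm])

end IsSolitonSol

theorem stmt_8_general {r : ℕ} {d : Fin r → ℕ} {μ : Fin r → ℝ} {ε : ℝ} {L : ℝ → ℝ}
    {X Y : Fin r → ℝ → ℝ} {I : Set ℝ} {s₀ : ℝ} (hI : I.OrdConnected) (hs₀ : s₀ ∈ I)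
    (hsol : IsSolitonSol r d μ ε L X Y I) (h₁ : solitonS₁ d μ ε L X Y s₀ = 0)
    (h₂ : solitonS₂ d X s₀ = 0) :
    ∀ s ∈ I, solitonS₁ d μ ε L X Y s = 0 ∧ solitonS₂ d X s = 0 := by
  have hzero := eqOn_zero_of_hasDerivWithinAt_mulVec hI hsol.continuousOn_solitonMatrix
    (fun s hs ↦ (hsol.hasDerivAt_solitonS₁_solitonS₂ hs).hasDerivWithinAt) hs₀ (by simp [h₁, h₂])
  exact fun s hs ↦ ⟨congrFun (hzero hs) 0, congrFun (hzero hs) 1⟩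

/-- The Einstein locus `{𝒮₁ = 0} ∩ {𝒮₂ = 0}` is preserved by the soliton ODE. -/
theorem stmt_8 (r : ℕ) (hr : 1 ≤ r) (d : Fin r → ℕ) (hd : ∀ i, 0 < d i)
    (μ : Fin r → ℝ) (ε : ℝ) (hε : 0 < ε) (n : ℕ) (hn : n = ∑ i, d i)
    (s₀ : ℝ) (L : ℝ → ℝ) (X Y : Fin r → ℝ → ℝ)
    (hsol : IsSolitonSol r d μ ε L X Y (Set.Ici s₀))
    (S₁ S₂ : ℝ → ℝ)
    (hS₁ : ∀ s, S₁ s = ∑ i, (d i : ℝ) * X i s ^ 2 + ∑ i, (d i : ℝ) * μ i * Y i s ^ 2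
        + ((n : ℝ) - 1) * (ε / 2) * L s ^ 2 - 1)
    (hS₂ : ∀ s, S₂ s = ∑ i, (d i : ℝ) * X i s - 1)
    (h₀ : S₁ s₀ = 0 ∧ S₂ s₀ = 0) :
    ∀ s ≥ s₀, S₁ s = 0 ∧ S₂ s = 0 := by
  obtain rfl : S₁ = solitonS₁ d μ ε L X Y := funext fun s ↦ by
    rw [hS₁, hn, Nat.cast_sum, solitonS₁]
  obtain rfl : S₂ = solitonS₂ d X := funext hS₂
  exact stmt_8_general Set.ordConnected_Ici Set.self_mem_Ici hsol h₀.1 h₀.2
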